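/- arXiv:2303.07222 — 2 statements merged into one kernel-verified Lean document; each statement's English description precedes it below -/
import Mathlib

section
/- Let $T>0$, $u_0\in\mathbb{C}$ with $\Re(u_0)\le 0$, and let $a,b,c:[0,T]\to\mathbb{C}$ be measurable bounded functions with $\Im(a(t))=0$, $a(t)>0$, and $\Re(c(t)) + \Im(b(t))^2/(4a(t)) \le 0$ for all $t\le T$. Then any solution $\psi$ of the Riccati ODE $\psi'(t)=a(t)\psi(t)^2+b(t)\psi(t)+c(t)$, $\psi(0)=u_0$, on $[0,t^*]\subseteq[0,T]$ satisfies the a priori bound $|\psi(t)| \le C(|u_0| + \int_0^T |c(s)|ds)$ for all $t\le t^*$, where $C=\sup_{s,s'\in[0,T]^2} e^{\int_s^{s'}\Re(b(u))du}$. -/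
open MeasureTheory Set

/-!
Write `F t z` for the right-hand side of the equation. The hypothesis on the coefficients is the
discriminant form of `Re (F t (i y)) ≤ 0` for all real `y`, and `Re (F t z)` differs from
`Re (F t (i Im z))` by a multiple of `Re z`. Hence `(Re ψ)⁺` satisfies a homogeneous linear
differential inequality, and by Gronwall's inequality it stays zero: `ψ` never leaves the left
half-plane. There `Re (a ψ + b) ≤ Re b`, so reading the equation as the linear one
`ψ' = (a ψ + b) ψ + c` gives `‖ψ‖' ≤ Re b * ‖ψ‖ + ‖c‖`, and a second application of Gronwall's
inequality bounds `‖ψ‖`.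
-/

section AbsolutelyContinuous

variable {p q : ℝ}

lemma absolutelyContinuousOnInterval_comp_of_locallyLipschitz {X Y : Type*}
    [SeminormedAddCommGroup X] [PseudoMetricSpace Y] {φ : X → Y} {f : ℝ → X}
    (hφ : LocallyLipschitz φ) (hf : AbsolutelyContinuousOnInterval f p q) :
    AbsolutelyContinuousOnInterval (fun t ↦ φ (f t)) p q := by
  obtain ⟨K, hK⟩ := hφ.locallyLipschitzOn.exists_lipschitzOnWith_of_compact
    (isCompact_uIcc.image_of_continuousOn hf.continuousOn)
  refine squeeze_zero' (.of_forall fun _ ↦ Finset.sum_nonneg fun _ _ ↦ dist_nonneg) ?_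
    (by simpa only [mul_zero] using Filter.Tendsto.const_mul (K : ℝ) hf)
  rw [Filter.eventually_inf_principal]
  refine .of_forall fun E hE ↦ ?_
  rw [Finset.mul_sum]
  exact Finset.sum_le_sum fun i hi ↦ hK.dist_le_mul _ (mem_image_of_mem f (hE.1 i hi).1) _
    (mem_image_of_mem f (hE.1 i hi).2)

lemma absolutelyContinuousOnInterval_of_hasDerivAt_of_norm_le {X : Type*} [NormedAddCommGroup X]
    [NormedSpace ℝ X] {f f' : ℝ → X} {K : ℝ} (hf : ∀ t ∈ uIcc p q, HasDerivAt f (f' t) t)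
    (hK : ∀ t ∈ uIcc p q, ‖f' t‖ ≤ K) : AbsolutelyContinuousOnInterval f p q :=
  ((convex_uIcc p q).lipschitzOnWith_of_nnnorm_hasDerivWithin_le (C := K.toNNReal)
    (fun t ht ↦ (hf t ht).hasDerivWithinAt)
    fun t ht ↦ NNReal.le_toNNReal_of_coe_le (hK t ht)).absolutelyContinuousOnInterval

lemma absolutelyContinuousOnInterval_exp_integral {β : ℝ → ℝ}
    (hβ : IntervalIntegrable β volume p q) :
    AbsolutelyContinuousOnInterval (fun s ↦ Real.exp (∫ u in s..q, β u)) p q := by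
  simp only [intervalIntegral.integral_symm q]
  exact absolutelyContinuousOnInterval_comp_of_locallyLipschitz
    (Real.contDiff_exp (n := 1)).locallyLipschitz
    (hβ.absolutelyContinuousOnInterval_intervalIntegral right_mem_uIcc).fun_neg

theorem gronwall_of_absolutelyContinuousOnInterval (hpq : p ≤ q) {f β γ : ℝ → ℝ}
    (hf : AbsolutelyContinuousOnInterval f p q) (hβ : IntervalIntegrable β volume p q)
    (hγ : IntervalIntegrable γ volume p q)
    (h : ∀ᵐ t, t ∈ Icc p q → deriv f t ≤ β t * f t + γ t) :
    f q ≤ Real.exp (∫ u in p..q, β u) * f p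
      + ∫ s in p..q, Real.exp (∫ u in s..q, β u) * γ s := by
  set E : ℝ → ℝ := fun s ↦ Real.exp (∫ u in s..q, β u) with hE
  have hE_ac : AbsolutelyContinuousOnInterval E p q :=
    absolutelyContinuousOnInterval_exp_integral hβ
  have hEf_ac : AbsolutelyContinuousOnInterval (fun s ↦ E s * f s) p q := hE_ac.fun_mul hf
  have hEf_deriv : ∀ᵐ s, s ∈ Icc p q → deriv (fun s ↦ E s * f s) s ≤ E s * γ s := by
    filter_upwards [h, hf.ae_differentiableAt, hβ.ae_hasDerivAt_integral] with s hs hf_s hβ_s hs_mem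
    rw [← uIcc_of_le hpq] at hs_mem
    have hE_deriv : HasDerivAt E (E s * -β s) s := by
      simpa only [hE, intervalIntegral.integral_symm q] using
        (hβ_s hs_mem q right_mem_uIcc).fun_neg.exp
    rw [(hE_deriv.fun_mul (hf_s hs_mem).hasDerivAt).deriv]
    have hE_pos : 0 < E s := Real.exp_pos _
    have := mul_le_mul_of_nonneg_left (hs (uIcc_of_le hpq ▸ hs_mem)) hE_pos.le
    linarith
  have hEf_le : E q * f q - E p * f p ≤ ∫ s in p..q, E s * γ s := by
    rw [← hEf_ac.integral_deriv_eq_sub]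
    exact intervalIntegral.integral_mono_ae_restrict hpq hEf_ac.intervalIntegrable_deriv
      (hγ.continuousOn_mul hE_ac.continuousOn)
      ((ae_restrict_iff' measurableSet_Icc).2 hEf_deriv)
  have hEq : E q = 1 := by simp only [hE, intervalIntegral.integral_same, Real.exp_zero]
  rw [hEq, one_mul] at hEf_le
  linarith

end AbsolutelyContinuous

section DerivPosPartNorm

lemma deriv_posPart_eq_ite {f : ℝ → ℝ} {f' x : ℝ} (hf : HasDerivAt f f' x) :
    deriv (fun t ↦ (f t)⁺) x = if 0 < f x then f' else 0 := by
  split_ifs with hx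
  · refine (hf.congr_of_eventuallyEq ?_).deriv
    filter_upwards [hf.continuousAt.eventually_const_lt hx] with t ht
    exact posPart_of_nonneg ht.le
  · refine IsLocalMin.deriv_eq_zero (.of_forall fun t ↦ ?_)
    simpa only [posPart_of_nonpos (not_lt.1 hx)] using posPart_nonneg (f t)

/- Where `f` vanishes the norm has a minimum, so its derivative is `0` by Mathlib's convention even
if it is not differentiable there, in agreement with the value of the quotient. -/
lemma deriv_norm_eq_inner_div_norm {X : Type*} [NormedAddCommGroup X] [InnerProductSpace ℝ X]
    {f : ℝ → X} {f' : X} {x : ℝ} (hf : HasDerivAt f f' x) :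
    deriv (fun t ↦ ‖f t‖) x = inner ℝ (f x) f' / ‖f x‖ := by
  by_cases hx : f x = 0
  · rw [hx, norm_zero, div_zero]
    refine IsLocalMin.deriv_eq_zero (.of_forall fun t ↦ ?_)
    simpa only [hx, norm_zero] using norm_nonneg (f t)
  · have hsqrt := (hf.norm_sq.sqrt (by simpa using hx)).deriv
    simp only [Real.sqrt_sq (norm_nonneg _)] at hsqrt
    rw [hsqrt, mul_div_mul_left _ _ two_ne_zero]

lemma deriv_norm_le_of_hasDerivAt_linear {f : ℝ → ℂ} {g c : ℂ} {x : ℝ}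
    (hf : HasDerivAt f (g * f x + c) x) :
    deriv (fun t ↦ ‖f t‖) x ≤ g.re * ‖f x‖ + ‖c‖ := by
  rw [deriv_norm_eq_inner_div_norm hf]
  rcases (norm_nonneg (f x)).eq_or_lt with hx | hx
  · simp only [← hx, div_zero, mul_zero, zero_add, norm_nonneg]
  · rw [div_le_iff₀ hx]
    have hg : inner ℝ (f x) (g * f x) = g.re * ‖f x‖ ^ 2 := by
      rw [Complex.inner, mul_assoc, Complex.mul_conj, Complex.re_mul_ofReal,
        Complex.normSq_eq_norm_sq]
    have hc : inner ℝ (f x) c ≤ ‖f x‖ * ‖c‖ := real_inner_le_norm _ _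
    rw [inner_add_right, hg]
    linarith

end DerivPosPartNorm

section RiccatiField

/-- The right-hand side of the Riccati equation, as a function of the unknown `z`. -/
def riccatiField (a b c z : ℂ) : ℂ := a * z ^ 2 + b * z + c

lemma re_riccatiField_eq_add (a b c z : ℂ) :
    (riccatiField a b c z).re = (riccatiField a b c (z.im * Complex.I)).re
      + (a * (z + z.im * Complex.I) + b).re * z.re := by
  simp only [riccatiField, pow_two, Complex.add_re, Complex.add_im, Complex.mul_re, Complex.mul_im,
    Complex.ofReal_re, Complex.ofReal_im, Complex.I_re, Complex.I_im]
  ring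

lemma re_riccatiField_mul_I (a b c : ℂ) (y : ℝ) :
    (riccatiField a b c (y * Complex.I)).re = c.re - b.im * y - a.re * y ^ 2 := by
  simp only [riccatiField, pow_two, Complex.add_re, Complex.mul_re, Complex.mul_im,
    Complex.ofReal_re, Complex.ofReal_im, Complex.I_re, Complex.I_im]
  ring

variable {a b c : ℂ}

lemma re_riccatiField_mul_I_nonpos (ha : 0 < a.re) (h : c.re + b.im ^ 2 / (4 * a.re) ≤ 0)
    (y : ℝ) : (riccatiField a b c (y * Complex.I)).re ≤ 0 := by
  have hsquare : a.re * (y + b.im / (2 * a.re)) ^ 2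
      = a.re * y ^ 2 + b.im * y + b.im ^ 2 / (4 * a.re) := by
    field_simp
    ring
  have : 0 ≤ a.re * (y + b.im / (2 * a.re)) ^ 2 := by positivity
  rw [re_riccatiField_mul_I]
  linarith

lemma re_nonneg_of_re_riccatiField_mul_I_nonpos
    (h : ∀ y : ℝ, (riccatiField a b c (y * Complex.I)).re ≤ 0) : 0 ≤ a.re := by
  by_contra! ha
  have hc (y : ℝ) : c.re ≤ a.re * y ^ 2 := by
    have hpos := h y
    have hneg := h (-y)
    rw [re_riccatiField_mul_I] at hpos hneg
    linarith
  have hle : c.re ≤ a.re * (1 + |c.re| / -a.re) := by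
    refine (hc (1 + |c.re| / -a.re)).trans (mul_le_mul_of_nonpos_left ?_ ha.le)
    exact le_self_pow₀ (le_add_of_nonneg_right (div_nonneg (abs_nonneg _) (neg_pos.2 ha).le))
      two_ne_zero
  have heq : a.re * (1 + |c.re| / -a.re) = a.re - |c.re| := by
    field_simp [ha.ne]
    ring
  linarith [neg_abs_le c.re]

end RiccatiField

/-- `ψ` is a Carathéodory solution of the Riccati equation `ψ' = a ψ² + b ψ + c` between `p` and
`q`: it is absolutely continuous and the equation holds almost everywhere. -/
structure IsRiccatiSolutionOn (a b c ψ : ℝ → ℂ) (p q : ℝ) : Prop where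
  absolutelyContinuousOnInterval : AbsolutelyContinuousOnInterval ψ p q
  ae_hasDerivAt : ∀ᵐ t, t ∈ uIcc p q → HasDerivAt ψ (riccatiField (a t) (b t) (c t) (ψ t)) t

namespace IsRiccatiSolutionOn

variable {a b c ψ : ℝ → ℂ} {p q r s : ℝ}

lemma of_hasDerivAt_of_norm_le {M : ℝ}
    (hM : ∀ t ∈ uIcc p q, ‖a t‖ ≤ M ∧ ‖b t‖ ≤ M ∧ ‖c t‖ ≤ M)
    (hψ : ∀ t ∈ uIcc p q, HasDerivAt ψ (riccatiField (a t) (b t) (c t) (ψ t)) t) :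
    IsRiccatiSolutionOn a b c ψ p q where
  absolutelyContinuousOnInterval := by
    obtain ⟨K, hK⟩ := isCompact_uIcc.exists_bound_of_continuousOn
      fun t ht ↦ (hψ t ht).continuousAt.continuousWithinAt
    refine absolutelyContinuousOnInterval_of_hasDerivAt_of_norm_le (K := M * K ^ 2 + M * K + M)
      hψ fun t ht ↦ ?_
    obtain ⟨ha, hb, hc⟩ := hM t ht
    have hM0 : 0 ≤ M := (norm_nonneg _).trans ha
    calc ‖riccatiField (a t) (b t) (c t) (ψ t)‖
        ≤ ‖a t‖ * ‖ψ t‖ ^ 2 + ‖b t‖ * ‖ψ t‖ + ‖c t‖ := by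
          rw [← norm_pow, ← norm_mul, ← norm_mul]
          exact norm_add₃_le
      _ ≤ M * K ^ 2 + M * K + M := by gcongr <;> exact hK t ht
  ae_hasDerivAt := .of_forall hψ

lemma mono (hψ : IsRiccatiSolutionOn a b c ψ p q) (hrs : uIcc r s ⊆ uIcc p q) :
    IsRiccatiSolutionOn a b c ψ r s where
  absolutelyContinuousOnInterval := hψ.absolutelyContinuousOnInterval.mono hrs
  ae_hasDerivAt := hψ.ae_hasDerivAt.mono fun _ ht hmem ↦ ht (hrs hmem)

lemma continuousOn (hψ : IsRiccatiSolutionOn a b c ψ p q) : ContinuousOn ψ (uIcc p q) :=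
  hψ.absolutelyContinuousOnInterval.continuousOn

theorem re_nonpos (hψ : IsRiccatiSolutionOn a b c ψ p q) (hpq : p ≤ q)
    (ha : IntervalIntegrable a volume p q) (hb : IntervalIntegrable b volume p q)
    (hF : ∀ᵐ t, t ∈ Icc p q → ∀ y : ℝ, (riccatiField (a t) (b t) (c t) (y * Complex.I)).re ≤ 0)
    (hψp : (ψ p).re ≤ 0) : (ψ q).re ≤ 0 := by
  set β : ℝ → ℝ := fun t ↦ (a t * (ψ t + (ψ t).im * Complex.I) + b t).re
  have hβ_int : IntervalIntegrable β volume p q := by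
    have hcont : ContinuousOn (fun t ↦ ψ t + (ψ t).im * Complex.I) (uIcc p q) := by
      have := hψ.continuousOn
      fun_prop
    have hsum := (ha.mul_continuousOn hcont).add hb
    exact ⟨hsum.1.re, hsum.2.re⟩
  have hpos_ac : AbsolutelyContinuousOnInterval (fun t ↦ (ψ t).re⁺) p q :=
    absolutelyContinuousOnInterval_comp_of_locallyLipschitz (φ := fun z : ℂ ↦ z.re⁺)
      (lipschitzWith_posPart.comp RCLike.lipschitzWith_re).locallyLipschitz
      hψ.absolutelyContinuousOnInterval
  have hpos_deriv : ∀ᵐ t, t ∈ Icc p q →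
      deriv (fun t ↦ (ψ t).re⁺) t ≤ β t * (ψ t).re⁺ + 0 := by
    filter_upwards [hF, hψ.ae_hasDerivAt] with t hFt hψt ht
    have hre : HasDerivAt (fun t ↦ (ψ t).re) (riccatiField (a t) (b t) (c t) (ψ t)).re t :=
      Complex.reCLM.hasFDerivAt.comp_hasDerivAt t (hψt (uIcc_of_le hpq ▸ ht))
    rw [deriv_posPart_eq_ite hre, add_zero]
    split_ifs with hx
    · rw [posPart_of_nonneg hx.le, re_riccatiField_eq_add]
      exact add_le_of_nonpos_left (hFt ht _)
    · rw [posPart_of_nonpos (not_lt.1 hx), mul_zero]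
  have hgronwall := gronwall_of_absolutelyContinuousOnInterval hpq hpos_ac hβ_int
    intervalIntegrable_const hpos_deriv
  rw [← posPart_eq_zero]
  refine le_antisymm ?_ (posPart_nonneg _)
  simpa only [posPart_of_nonpos hψp, mul_zero, intervalIntegral.integral_zero, add_zero]
    using hgronwall

theorem norm_le (hψ : IsRiccatiSolutionOn a b c ψ p q) (hpq : p ≤ q)
    (ha : IntervalIntegrable a volume p q) (hb : IntervalIntegrable b volume p q)
    (hc : IntervalIntegrable c volume p q) (ha_im : ∀ᵐ t, t ∈ Icc p q → (a t).im = 0)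
    (hF : ∀ᵐ t, t ∈ Icc p q → ∀ y : ℝ, (riccatiField (a t) (b t) (c t) (y * Complex.I)).re ≤ 0)
    (hψp : (ψ p).re ≤ 0) :
    ‖ψ q‖ ≤ Real.exp (∫ u in p..q, (b u).re) * ‖ψ p‖
      + ∫ s in p..q, Real.exp (∫ u in s..q, (b u).re) * ‖c s‖ := by
  refine gronwall_of_absolutelyContinuousOnInterval hpq
    (absolutelyContinuousOnInterval_comp_of_locallyLipschitz
      lipschitzWith_one_norm.locallyLipschitz hψ.absolutelyContinuousOnInterval)
    ⟨hb.1.re, hb.2.re⟩ hc.norm ?_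
  filter_upwards [ha_im, hF, hψ.ae_hasDerivAt] with t ha_t hF_t hψ_t ht
  have hψ_re : (ψ t).re ≤ 0 := by
    have hsub : uIcc p t ⊆ uIcc p q := by
      rw [uIcc_of_le hpq, uIcc_of_le ht.1]
      exact Icc_subset_Icc_right ht.2
    refine (hψ.mono hsub).re_nonpos ht.1 (ha.mono_set hsub) (hb.mono_set hsub) ?_ hψp
    exact hF.mono fun s hs hs_mem ↦ hs ⟨hs_mem.1, hs_mem.2.trans ht.2⟩
  have hlinear : HasDerivAt ψ ((a t * ψ t + b t) * ψ t + c t) t := by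
    convert hψ_t (uIcc_of_le hpq ▸ ht) using 1
    rw [riccatiField]
    ring
  have hre_le : (a t * ψ t + b t).re ≤ (b t).re := by
    rw [Complex.add_re, Complex.mul_re, ha_t ht]
    linarith [mul_nonpos_of_nonneg_of_nonpos
      (re_nonneg_of_re_riccatiField_mul_I_nonpos (hF_t ht)) hψ_re]
  exact (deriv_norm_le_of_hasDerivAt_linear hlinear).trans (by gcongr)

theorem norm_le_mul_of_exp_integral_le (hψ : IsRiccatiSolutionOn a b c ψ p q) (hpq : p ≤ q)
    (ha : IntervalIntegrable a volume p q) (hb : IntervalIntegrable b volume p q)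
    (hc : IntervalIntegrable c volume p q) (ha_im : ∀ᵐ t, t ∈ Icc p q → (a t).im = 0)
    (hF : ∀ᵐ t, t ∈ Icc p q → ∀ y : ℝ, (riccatiField (a t) (b t) (c t) (y * Complex.I)).re ≤ 0)
    (hψp : (ψ p).re ≤ 0) {C : ℝ}
    (hC : ∀ s ∈ Icc p q, Real.exp (∫ u in s..q, (b u).re) ≤ C) :
    ‖ψ q‖ ≤ C * (‖ψ p‖ + ∫ s in p..q, ‖c s‖) := by
  have hexp_int : IntervalIntegrable (fun s ↦ Real.exp (∫ u in s..q, (b u).re) * ‖c s‖)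
      volume p q :=
    hc.norm.continuousOn_mul
      (absolutelyContinuousOnInterval_exp_integral ⟨hb.1.re, hb.2.re⟩).continuousOn
  calc ‖ψ q‖ ≤ Real.exp (∫ u in p..q, (b u).re) * ‖ψ p‖
        + ∫ s in p..q, Real.exp (∫ u in s..q, (b u).re) * ‖c s‖ :=
        hψ.norm_le hpq ha hb hc ha_im hF hψp
    _ ≤ C * ‖ψ p‖ + ∫ s in p..q, C * ‖c s‖ := by
        gcongr
        · exact hC p (left_mem_Icc.2 hpq)
        · exact intervalIntegral.integral_mono_on hpq hexp_int (hc.norm.const_mul C)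
            fun s hs ↦ mul_le_mul_of_nonneg_right (hC s hs) (norm_nonneg _)
    _ = C * (‖ψ p‖ + ∫ s in p..q, ‖c s‖) := by
        rw [intervalIntegral.integral_const_mul, mul_add]

end IsRiccatiSolutionOn

lemma intervalIntegrable_of_norm_le {X : Type*} [NormedAddCommGroup X]
    {f : ℝ → X} {p q M : ℝ} (hf : AEStronglyMeasurable f)
    (hM : ∀ t ∈ uIcc p q, ‖f t‖ ≤ M) : IntervalIntegrable f volume p q :=
  (Measure.integrableOn_of_bounded isCompact_uIcc.measure_ne_top hf
    ((ae_restrict_iff' measurableSet_uIcc).2 (.of_forall hM))).intervalIntegrable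

lemma exp_integral_le_sSup {β : ℝ → ℝ} {p q s s' : ℝ} (hβ : IntervalIntegrable β volume p q)
    (hs : s ∈ Icc p q) (hs' : s' ∈ Icc p q) :
    Real.exp (∫ u in s..s', β u) ≤ sSup {x : ℝ | ∃ s ∈ Icc p q, ∃ s' ∈ Icc p q,
      x = Real.exp (∫ u in s..s', β u)} := by
  refine le_csSup ⟨Real.exp |∫ u in p..q, ‖β u‖|, ?_⟩ ⟨s, hs, s', hs', rfl⟩
  rintro _ ⟨r, hr, r', hr', rfl⟩
  have hsub : uIoc r r' ⊆ uIoc p q := by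
    rw [uIoc_of_le (hr.1.trans hr.2)]
    exact Ioc_subset_Ioc (le_min hr.1 hr'.1) (max_le hr.2 hr'.2)
  refine Real.exp_le_exp.2 ((Real.le_norm_self _).trans ?_)
  exact intervalIntegral.norm_integral_le_abs_integral_norm.trans
    (intervalIntegral.abs_integral_mono_interval hsub (.of_forall fun _ ↦ norm_nonneg _) hβ.norm)

theorem stmt1_general {p q T : ℝ} (hq : q ∈ Icc p T) {a b c ψ : ℝ → ℂ}
    (ha : IntervalIntegrable a volume p q) (hb : IntervalIntegrable b volume p T)
    (hc : IntervalIntegrable c volume p T) (ha_im : ∀ᵐ t, t ∈ Icc p q → (a t).im = 0)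
    (hF : ∀ᵐ t, t ∈ Icc p q → ∀ y : ℝ, (riccatiField (a t) (b t) (c t) (y * Complex.I)).re ≤ 0)
    (hψ : IsRiccatiSolutionOn a b c ψ p q) (hψp : (ψ p).re ≤ 0) :
    ∀ t ∈ Icc p q, ‖ψ t‖ ≤ sSup {x : ℝ | ∃ s ∈ Icc p T, ∃ s' ∈ Icc p T,
      x = Real.exp (∫ u in s..s', (b u).re)} * (‖ψ p‖ + ∫ s in p..T, ‖c s‖) := by
  intro t ht
  set C := sSup {x : ℝ | ∃ s ∈ Icc p T, ∃ s' ∈ Icc p T, x = Real.exp (∫ u in s..s', (b u).re)}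
  have hpq : p ≤ q := hq.1
  have htT : t ∈ Icc p T := ⟨ht.1, ht.2.trans hq.2⟩
  have htq_sub : uIcc p t ⊆ uIcc p q := by
    simpa only [uIcc_of_le, hpq, ht.1] using Icc_subset_Icc_right ht.2
  have htT_sub : uIcc p t ⊆ uIcc p T := by
    simpa only [uIcc_of_le, htT.1.trans htT.2, ht.1] using Icc_subset_Icc_right htT.2
  have hC : ∀ s ∈ Icc p t, Real.exp (∫ u in s..t, (b u).re) ≤ C := fun s hs ↦
    exp_integral_le_sSup ⟨hb.1.re, hb.2.re⟩ ⟨hs.1, hs.2.trans htT.2⟩ htT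
  have hC_nonneg : 0 ≤ C := (Real.exp_pos _).le.trans (hC t (right_mem_Icc.2 ht.1))
  have hIcc : Icc p t ⊆ Icc p q := Icc_subset_Icc_right ht.2
  refine ((hψ.mono htq_sub).norm_le_mul_of_exp_integral_le ht.1 (ha.mono_set htq_sub)
    (hb.mono_set htT_sub) (hc.mono_set htT_sub) (ha_im.mono fun s hs h ↦ hs (hIcc h))
    (hF.mono fun s hs h ↦ hs (hIcc h)) hψp hC).trans ?_
  gcongr
  exact intervalIntegral.integral_mono_interval le_rfl ht.1 htT.2
    (.of_forall fun _ ↦ norm_nonneg _) hc.norm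

/-- A priori bound for solutions of the complex Riccati ODE. -/
theorem stmt1 (T : ℝ) (hT : 0 < T) (u0 : ℂ) (hu0 : u0.re ≤ 0)
    (a b c : ℝ → ℂ) (ha : Measurable a) (hb : Measurable b) (hc : Measurable c)
    (M : ℝ) (hbdd : ∀ t ∈ Icc (0:ℝ) T, ‖a t‖ ≤ M ∧ ‖b t‖ ≤ M ∧ ‖c t‖ ≤ M)
    (haim : ∀ t ∈ Icc (0:ℝ) T, (a t).im = 0)
    (hapos : ∀ t ∈ Icc (0:ℝ) T, 0 < (a t).re)
    (hcond : ∀ t ∈ Icc (0:ℝ) T, (c t).re + (b t).im ^ 2 / (4 * (a t).re) ≤ 0)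
    (tstar : ℝ) (ht1 : 0 < tstar) (ht2 : tstar ≤ T)
    (ψ : ℝ → ℂ) (hψ0 : ψ 0 = u0)
    (hode : ∀ t ∈ Icc (0:ℝ) tstar, HasDerivAt ψ (a t * ψ t ^ 2 + b t * ψ t + c t) t)
    (C : ℝ)
    (hC : C = sSup {x : ℝ | ∃ s ∈ Icc (0:ℝ) T, ∃ s' ∈ Icc (0:ℝ) T,
      x = Real.exp (∫ u in s..s', (b u).re)}) :
    ∀ t ∈ Icc (0:ℝ) tstar, ‖ψ t‖ ≤ C * (‖u0‖ + ∫ s in (0:ℝ)..T, ‖c s‖) := by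
  subst hψ0 hC
  have hsub : Icc 0 tstar ⊆ Icc 0 T := Icc_subset_Icc_right ht2
  rw [← uIcc_of_le hT.le] at hbdd
  have hsub' : uIcc 0 tstar ⊆ uIcc 0 T := by
    simpa only [uIcc_of_le, hT.le, ht1.le] using hsub
  exact stmt1_general ⟨ht1.le, ht2⟩
    (intervalIntegrable_of_norm_le ha.aestronglyMeasurable fun t ht ↦ (hbdd t (hsub' ht)).1)
    (intervalIntegrable_of_norm_le hb.aestronglyMeasurable fun t ht ↦ (hbdd t ht).2.1)
    (intervalIntegrable_of_norm_le hc.aestronglyMeasurable fun t ht ↦ (hbdd t ht).2.2)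
    (.of_forall fun t ht ↦ haim t (hsub ht))
    (.of_forall fun t ht ↦ re_riccatiField_mul_I_nonpos (hapos t (hsub ht)) (hcond t (hsub ht)))
    (.of_hasDerivAt_of_norm_le (fun t ht ↦ hbdd t (hsub' ht)) (uIcc_of_le ht1.le ▸ hode)) hu0
end

section
/- Fix $\epsilon>0$, $H\in(-1/2,1/2)$, and let $K_{H,\epsilon}(t)=(t+\epsilon)^{H-1/2}$. Suppose $L_\epsilon(dt)=\frac{\delta_0(dt)}{K_{H,\epsilon}(0)}+\ell_\epsilon(t)dt$ is a resolvent of the first kind of $K_{H,\epsilon}$, i.e. $\int_{[0,t]}K_{H,\epsilon}(t-s)L_\epsilon(ds)=1$ for all $t\ge 0$, with $\ell_\epsilon$ locally integrable. Then $(K'_{H,\epsilon}*L_\epsilon)(0)=K'_{H,\epsilon}(0)/K_{H,\epsilon}(0)=(H-1/2)\epsilon^{-1}$, and almost everywhere $K'_{H,\epsilon} = (H-\tfrac{1}{2})\epsilon^{-1}K_{H,\epsilon} + (K'_{H,\epsilon}*L_\epsilon)'*K_{H,\epsilon}$, where $(K'_{H,\epsilon}*L_\epsilon)$ is continuously differentiable.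 -/
open MeasureTheory Set intervalIntegral

/-- The shifted fractional kernel. -/
noncomputable def Kf (ε H t : ℝ) : ℝ := (t + ε) ^ (H - 1/2)

/-- Its derivative. -/
noncomputable def Kf' (ε H t : ℝ) : ℝ := (H - 1/2) * (t + ε) ^ (H - 3/2)

/-- Convolution of `f` with the measure `L_ε(ds) = δ₀(ds)/K(0) + ℓ(s)ds`. -/
noncomputable def convL (ε H : ℝ) (ℓ : ℝ → ℝ) (f : ℝ → ℝ) (t : ℝ) : ℝ :=
  f t / Kf ε H 0 + ∫ s in (0:ℝ)..t, f (t - s) * ℓ s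

/-! Writing `L = a δ₀ + ℓ(t) dt` and differentiating `K * L = 1` gives `K 0 • ℓ = -(K' * L)` almost
everywhere, so `ℓ` has a continuous version and `K' * L` is `C¹`. Convolving `K * L = 1` with `K'`
gives `∫₀ᵗ K' = ((K' * L) * K)(t)`, and the identity is the derivative of this equation. -/

section HalfLine

variable {E : Type*} [NormedAddCommGroup E]

theorem intervalIntegrable_of_locallyIntegrableOn_Ici {g : ℝ → E} {a t : ℝ}
    (hg : LocallyIntegrableOn g (Ici a)) (ht : a ≤ t) : IntervalIntegrable g volume a t :=
  (intervalIntegrable_iff_integrableOn_Icc_of_le ht).2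
    (hg.integrableOn_compact_subset Icc_subset_Ici_self isCompact_Icc)

theorem locallyIntegrable_indicator_of_isClosed {s : Set ℝ} (hs : IsClosed s) {g : ℝ → E}
    (hg : LocallyIntegrableOn g s) : LocallyIntegrable (s.indicator g) := by
  refine locallyIntegrable_iff.2 fun k hk => ?_
  rw [IntegrableOn, integrable_indicator_iff hs.measurableSet, IntegrableOn,
    Measure.restrict_restrict hs.measurableSet]
  exact hg.integrableOn_compact_subset inter_subset_left (hk.inter_left hs)

theorem continuous_comp_max_of_continuousOn_Ici {X : Type*} [TopologicalSpace X] {f : ℝ → X} {a : ℝ}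
    (hf : ContinuousOn f (Ici a)) : Continuous fun x => f (max x a) :=
  hf.comp_continuous (by fun_prop) fun x => le_max_right x a

variable [NormedSpace ℝ E]

theorem contDiffOn_one_of_hasDerivWithinAt {f f' : ℝ → E} {s : Set ℝ} (hs : UniqueDiffOn ℝ s)
    (hf : ∀ x ∈ s, HasDerivWithinAt f (f' x) s x) (hf' : ContinuousOn f' s) :
    ContDiffOn ℝ 1 f s :=
  (contDiffOn_one_iff_derivWithin hs).2 ⟨fun x hx => (hf x hx).differentiableWithinAt,
    hf'.congr fun x hx => (hf x hx).derivWithin (hs x hx)⟩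

theorem hasDerivWithinAt_of_contDiffOn_one {f : ℝ → E} {s : Set ℝ} (hs : UniqueDiffOn ℝ s)
    (hf : ContDiffOn ℝ 1 f s) :
    (∀ x ∈ s, HasDerivWithinAt f (derivWithin f s x) s x) ∧ ContinuousOn (derivWithin f s) s :=
  ((contDiffOn_one_iff_derivWithin hs).1 hf).imp_left fun h x hx => (h x hx).hasDerivWithinAt

theorem ae_eq_zero_of_forall_integral_eq_zero [CompleteSpace E] {f : ℝ → E} {a : ℝ}
    (hf : LocallyIntegrableOn f (Ici a)) (h : ∀ t, a ≤ t → ∫ s in a..t, f s = 0) :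
    f =ᵐ[volume.restrict (Ici a)] 0 := by
  rw [← restrict_Ioi_eq_restrict_Ici, Filter.EventuallyEq, ae_restrict_iff' measurableSet_Ioi]
  filter_upwards [LocallyIntegrable.ae_hasDerivAt_integral
    (locallyIntegrable_indicator_of_isClosed isClosed_Ici hf)] with x hx (hax : a < x)
  have hprimitive : (fun t => ∫ s in a..t, (Ici a).indicator f s) =ᶠ[nhds x] fun _ => 0 := by
    filter_upwards [Ioi_mem_nhds hax] with t (ht : a < t)
    rw [← h t ht.le]
    refine integral_congr fun s hs => indicator_of_mem ?_ f
    exact (uIcc_of_le ht.le ▸ hs).1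
  have hderiv := (hx a).unique ((hasDerivAt_const x (0 : E)).congr_of_eventuallyEq hprimitive)
  rwa [indicator_of_mem (mem_Ici.2 hax.le)] at hderiv

theorem hasDerivWithinAt_integral_of_continuousOn_Ici [CompleteSpace E] {f : ℝ → E} {a t : ℝ}
    (hf : ContinuousOn f (Ici a)) (ht : a ≤ t) :
    HasDerivWithinAt (fun x => ∫ s in a..x, f s) (f t) (Ici a) t := by
  have hF := continuous_comp_max_of_continuousOn_Ici hf
  have hderiv := (hF.integral_hasStrictDerivAt a t).hasDerivAt.hasDerivWithinAt (s := Ici a)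
  rw [max_eq_left ht] at hderiv
  have hcongr : ∀ x ∈ Ici a, ∫ s in a..x, f s = ∫ s in a..x, f (max s a) := fun x hx =>
    integral_congr fun s hs => by rw [max_eq_left (uIcc_of_le (mem_Ici.1 hx) ▸ hs).1]
  exact hderiv.congr hcongr (hcongr t ht)

theorem eq_add_integral_of_hasDerivWithinAt_Ici [CompleteSpace E] {f f' : ℝ → E} {a t : ℝ}
    (hf : ∀ x ∈ Ici a, HasDerivWithinAt f (f' x) (Ici a) x) (hf' : ContinuousOn f' (Ici a))
    (ht : a ≤ t) : f t = f a + ∫ s in a..t, f' s := by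
  rw [integral_eq_sub_of_hasDerivAt_of_le ht, add_sub_cancel]
  · exact fun x hx => (hf x hx.1).continuousWithinAt.mono Icc_subset_Ici_self
  · exact fun x hx => (hf x hx.1.le).hasDerivAt (Ici_mem_nhds hx.1)
  · exact (hf'.mono Icc_subset_Ici_self).intervalIntegrable_of_Icc ht

/-- The triangle `a ≤ s ≤ r ≤ b` in the `(r, s)`-plane: the domain of integration of the iterated
integral of `s ∈ [a, r]` and `r ∈ [a, b]`. -/
def orderedTriangle (a b : ℝ) : Set (ℝ × ℝ) := {p | a ≤ p.2 ∧ p.2 ≤ p.1 ∧ p.1 ≤ b}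

theorem isCompact_orderedTriangle (a b : ℝ) : IsCompact (orderedTriangle a b) := by
  refine (isCompact_Icc (a := (a, a)) (b := (b, b))).of_isClosed_subset ?_ ?_
  · exact (isClosed_le continuous_const continuous_snd).inter
      ((isClosed_le continuous_snd continuous_fst).inter
        (isClosed_le continuous_fst continuous_const))
  · exact fun p ⟨has, hsr, hrb⟩ => ⟨⟨has.trans hsr, has⟩, ⟨hrb, hsr.trans hrb⟩⟩

theorem integral_integral_swap_orderedTriangle {Φ : ℝ → ℝ → E} {a b : ℝ} (hab : a ≤ b)
    (hΦ : IntegrableOn (Function.uncurry Φ) (orderedTriangle a b)) :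
    ∫ r in a..b, ∫ s in a..r, Φ r s = ∫ s in a..b, ∫ r in s..b, Φ r s := by
  set T := orderedTriangle a b
  have hint : Integrable (Function.uncurry fun r s => T.indicator (Function.uncurry Φ) (r, s))
      ((volume.restrict (Ioc a b)).prod (volume.restrict (Ioc a b))) := by
    rw [Measure.prod_restrict]
    exact ((integrable_indicator_iff (isCompact_orderedTriangle a b).measurableSet).2
      hΦ).integrableOn
  have hsection_snd : ∀ r ∈ Ioc a b,
      ∫ s in a..r, Φ r s = ∫ s in Ioc a b, T.indicator (Function.uncurry Φ) (r, s) := fun r hr => by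
    have hset : Ioc a b ∩ Ioc a r = Ioc a r := inter_eq_right.2 (Ioc_subset_Ioc_right hr.2)
    rw [integral_of_le hr.1.le, ← hset, ← setIntegral_indicator measurableSet_Ioc]
    refine setIntegral_congr_fun measurableSet_Ioc fun s hs => ?_
    simp [T, orderedTriangle, indicator, hs.1, hs.1.le, hr.2]
  have hsection_fst : ∀ s ∈ Ioc a b,
      ∫ r in s..b, Φ r s = ∫ r in Ioc a b, T.indicator (Function.uncurry Φ) (r, s) := fun s hs => by
    have hset : Ioc a b ∩ Icc s b = Icc s b :=
      inter_eq_right.2 fun r hr => ⟨hs.1.trans_le hr.1, hr.2⟩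
    rw [integral_of_le hs.2, ← integral_Icc_eq_integral_Ioc, ← hset,
      ← setIntegral_indicator measurableSet_Icc]
    refine setIntegral_congr_fun measurableSet_Ioc fun r hr => ?_
    simp [T, orderedTriangle, indicator, hs.1.le, hr.2]
  rw [integral_of_le hab, integral_of_le hab, setIntegral_congr_fun measurableSet_Ioc hsection_snd,
    setIntegral_congr_fun measurableSet_Ioc hsection_fst]
  exact integral_integral_swap hint

end HalfLine

/-- The convolution `(f * g)(t) = ∫₀ᵗ f(t - s) g(s) ds` of functions on the half-line. It is meant
for `0 ≤ t`, where it depends only on the values of `f` and `g` on `[0, t]`. -/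
noncomputable def causalConv (f g : ℝ → ℝ) (t : ℝ) : ℝ := ∫ s in (0:ℝ)..t, f (t - s) * g s

local infixl:70 " ⋆₊ " => causalConv

section CausalConv

variable {f f' g h : ℝ → ℝ} {t : ℝ}

theorem causalConv_comm (f g : ℝ → ℝ) : f ⋆₊ g = g ⋆₊ f := by
  ext t
  simpa [causalConv, mul_comm] using
    (integral_comp_sub_left (a := 0) (b := t) (fun s => f s * g (t - s)) t)

theorem one_causalConv (f : ℝ → ℝ) (t : ℝ) : (1 ⋆₊ f) t = ∫ s in (0:ℝ)..t, f s := by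
  simp [causalConv]

theorem causalConv_congr (hf : EqOn f f' (Ici 0)) (hgh : g =ᵐ[volume.restrict (Ici 0)] h)
    (ht : 0 ≤ t) : (f ⋆₊ g) t = (f' ⋆₊ h) t := by
  refine integral_congr_ae ?_
  filter_upwards [(ae_restrict_iff' measurableSet_Ici).1 hgh] with s hs hst
  rw [uIoc_of_le ht] at hst
  rw [hf (sub_nonneg.2 hst.2), hs hst.1.le]

theorem causalConv_congr_left (hf : EqOn f f' (Ici 0)) (ht : 0 ≤ t) : (f ⋆₊ g) t = (f' ⋆₊ g) t :=
  causalConv_congr hf Filter.EventuallyEq.rfl ht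

theorem intervalIntegrable_causalConv_integrand (hf : ContinuousOn f (Ici 0))
    (hg : LocallyIntegrableOn g (Ici 0)) (ht : 0 ≤ t) :
    IntervalIntegrable (fun s => f (t - s) * g s) volume 0 t := by
  refine (intervalIntegrable_of_locallyIntegrableOn_Ici hg ht).continuousOn_mul ?_
  exact hf.comp (by fun_prop) fun s hs => sub_nonneg.2 (uIcc_of_le ht ▸ hs).2

theorem causalConv_const_mul_add_left (a : ℝ) (hf : ContinuousOn f (Ici 0))
    (hg : ContinuousOn g (Ici 0)) (hh : LocallyIntegrableOn h (Ici 0)) (ht : 0 ≤ t) :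
    ((fun s => a * f s + g s) ⋆₊ h) t = a * (f ⋆₊ h) t + (g ⋆₊ h) t := by
  unfold causalConv
  rw [← intervalIntegral.integral_const_mul, ← intervalIntegral.integral_add
    ((intervalIntegrable_causalConv_integrand hf hh ht).const_mul a)
    (intervalIntegrable_causalConv_integrand hg hh ht)]
  exact integral_congr fun s _ => by ring

theorem continuous_causalConv (hf : Continuous f) (hg : LocallyIntegrable g) :
    Continuous (f ⋆₊ g) := by
  refine continuous_iff_continuousAt.2 fun t => ?_
  obtain ⟨R, hR⟩ : ∃ R, |t| < R := exists_gt |t|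
  have hR0 : 0 < R := (abs_nonneg t).trans_lt hR
  have ht : t ∈ Ioo (-R) R := abs_lt.1 hR
  obtain ⟨C, hC⟩ := (isCompact_Icc (a := -(2 * R)) (b := 2 * R)).exists_bound_of_continuousOn
    hf.continuousOn
  have hjoint : ContinuousAt (fun p : ℝ × ℝ => ∫ s in (0:ℝ)..p.2, f (p.1 - s) * g s) (t, t) := by
    refine continuousAt_parametric_primitive_of_dominated (F := fun x s => f (x - s) * g s)
      (fun s => C * ‖g s‖) (-R) R (fun x => ?_) ?_ ?_ ?_ ⟨by linarith, hR0⟩ ht (by simp)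
    · exact (hf.comp (continuous_sub_left x)).aestronglyMeasurable.mul
        hg.aestronglyMeasurable.restrict
    · filter_upwards [Ioo_mem_nhds ht.1 ht.2] with x hx
      filter_upwards [ae_restrict_mem measurableSet_uIoc] with s hs
      rw [uIoc_of_le (by linarith)] at hs
      rw [norm_mul]
      gcongr
      exact hC _ ⟨by linarith [hs.2, hx.1], by linarith [hs.1, hx.2]⟩
    · exact (hg.integrableOn_isCompact isCompact_uIcc).intervalIntegrable.norm.const_mul C
    · exact Filter.Eventually.of_forall fun s => by fun_prop
  exact hjoint.comp (f := fun x : ℝ => (x, x)) (by fun_prop)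

theorem continuousOn_causalConv (hf : ContinuousOn f (Ici 0)) (hg : LocallyIntegrableOn g (Ici 0)) :
    ContinuousOn (f ⋆₊ g) (Ici 0) := by
  refine (continuous_causalConv (continuous_comp_max_of_continuousOn_Ici hf)
    (locallyIntegrable_indicator_of_isClosed isClosed_Ici hg)).continuousOn.congr fun t ht => ?_
  refine causalConv_congr (fun x (hx : 0 ≤ x) => ?_) ?_ ht
  · rw [max_eq_left hx]
  · exact (indicator_ae_eq_restrict measurableSet_Ici).symm

theorem integrableOn_orderedTriangle_causalConv_integrand (hf : ContinuousOn f (Ici 0))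
    (hg : ContinuousOn g (Ici 0)) (hh : LocallyIntegrableOn h (Ici 0)) (t : ℝ) :
    IntegrableOn (fun p : ℝ × ℝ => f (t - p.1) * g (p.1 - p.2) * h p.2) (orderedTriangle 0 t) := by
  have hcont : ContinuousOn (fun p : ℝ × ℝ => f (t - p.1) * g (p.1 - p.2)) (orderedTriangle 0 t) :=
    (hf.comp (by fun_prop) fun p hp => sub_nonneg.2 hp.2.2).mul
      (hg.comp (by fun_prop) fun p hp => sub_nonneg.2 hp.2.1)
  have hh_snd : IntegrableOn (fun p : ℝ × ℝ => h p.2) (Icc 0 t ×ˢ Icc 0 t) := by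
    rw [IntegrableOn, Measure.volume_eq_prod, ← Measure.prod_restrict]
    exact Integrable.comp_snd (hh.integrableOn_compact_subset Icc_subset_Ici_self isCompact_Icc) _
  refine (hh_snd.mono_set ?_).continuousOn_mul hcont (isCompact_orderedTriangle 0 t)
  exact fun p ⟨h0s, hsr, hrt⟩ => ⟨⟨h0s.trans hsr, hrt⟩, h0s, hsr.trans hrt⟩

theorem causalConv_assoc (hf : ContinuousOn f (Ici 0)) (hg : ContinuousOn g (Ici 0))
    (hh : LocallyIntegrableOn h (Ici 0)) (ht : 0 ≤ t) :
    (f ⋆₊ g ⋆₊ h) t = (f ⋆₊ (g ⋆₊ h)) t := by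
  have hinner : ∀ s, ∫ r in s..t, f (t - r) * g (r - s) * h s = (f ⋆₊ g) (t - s) * h s := by
    intro s
    have hshift := integral_comp_sub_right (a := s) (b := t) (fun u => f (t - s - u) * g u) s
    simp only [sub_sub_sub_cancel_right, sub_self] at hshift
    rw [intervalIntegral.integral_mul_const, hshift, causalConv]
  calc (f ⋆₊ g ⋆₊ h) t
      = ∫ s in (0:ℝ)..t, ∫ r in s..t, f (t - r) * g (r - s) * h s :=
        integral_congr fun s _ => (hinner s).symm
    _ = ∫ r in (0:ℝ)..t, ∫ s in (0:ℝ)..r, f (t - r) * g (r - s) * h s :=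
        (integral_integral_swap_orderedTriangle (Φ := fun r s => f (t - r) * g (r - s) * h s) ht
          (integrableOn_orderedTriangle_causalConv_integrand hf hg hh t)).symm
    _ = (f ⋆₊ (g ⋆₊ h)) t := integral_congr fun r _ => by
        simp only [causalConv, mul_assoc, intervalIntegral.integral_const_mul]

theorem causalConv_left_comm (hf : ContinuousOn f (Ici 0)) (hg : ContinuousOn g (Ici 0))
    (hh : LocallyIntegrableOn h (Ici 0)) (ht : 0 ≤ t) :
    (f ⋆₊ (g ⋆₊ h)) t = (g ⋆₊ (f ⋆₊ h)) t := by
  rw [← causalConv_assoc hf hg hh ht, causalConv_comm f g, causalConv_assoc hg hf hh ht]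

theorem causalConv_eq_add_integral (hf : ∀ x ∈ Ici 0, HasDerivWithinAt f (f' x) (Ici 0) x)
    (hf' : ContinuousOn f' (Ici 0)) (hg : LocallyIntegrableOn g (Ici 0)) (ht : 0 ≤ t) :
    (f ⋆₊ g) t = f 0 * (∫ s in (0:ℝ)..t, g s) + ∫ s in (0:ℝ)..t, (f' ⋆₊ g) s := by
  have hone : ContinuousOn (1 : ℝ → ℝ) (Ici 0) := continuousOn_const
  have hf'_int := hf'.locallyIntegrableOn (μ := volume) measurableSet_Ici
  have hf_eq : EqOn f (fun x => f 0 * (1 : ℝ → ℝ) x + (1 ⋆₊ f') x) (Ici 0) := fun x hx => by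
    simpa only [Pi.one_apply, mul_one, one_causalConv] using
      eq_add_integral_of_hasDerivWithinAt_Ici hf hf' hx
  rw [causalConv_congr_left hf_eq ht, causalConv_const_mul_add_left _ hone
    (continuousOn_causalConv hone hf'_int) hg ht, causalConv_assoc hone hf' hg ht,
    one_causalConv, one_causalConv]

theorem hasDerivWithinAt_causalConv (hf : ∀ x ∈ Ici 0, HasDerivWithinAt f (f' x) (Ici 0) x)
    (hf' : ContinuousOn f' (Ici 0)) (hg : ContinuousOn g (Ici 0)) (ht : 0 ≤ t) :
    HasDerivWithinAt (f ⋆₊ g) (f 0 * g t + (f' ⋆₊ g) t) (Ici 0) t := by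
  have hg_int := hg.locallyIntegrableOn (μ := volume) measurableSet_Ici
  have hderiv := ((hasDerivWithinAt_integral_of_continuousOn_Ici hg ht).const_mul (f 0)).add
    (hasDerivWithinAt_integral_of_continuousOn_Ici (continuousOn_causalConv hf' hg_int) ht)
  have hcongr := fun x (hx : x ∈ Ici (0:ℝ)) => causalConv_eq_add_integral hf hf' hg_int hx
  exact hderiv.congr hcongr (hcongr t ht)

theorem contDiffOn_causalConv (hf : ContDiffOn ℝ 1 f (Ici 0)) (hg : ContinuousOn g (Ici 0)) :
    ContDiffOn ℝ 1 (f ⋆₊ g) (Ici 0) := by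
  obtain ⟨hf_deriv, hf'⟩ := hasDerivWithinAt_of_contDiffOn_one (uniqueDiffOn_Ici 0) hf
  refine contDiffOn_one_of_hasDerivWithinAt (uniqueDiffOn_Ici 0)
    (fun t ht => hasDerivWithinAt_causalConv hf_deriv hf' hg ht) ?_
  exact (hg.const_mul (f 0)).add
    (continuousOn_causalConv hf' (hg.locallyIntegrableOn measurableSet_Ici))

end CausalConv

/-- The convolution `f * L` of a function `f` on the half-line with the measure
`L(dt) = a δ₀(dt) + ℓ(t) dt`. -/
noncomputable def atomConv (a : ℝ) (ℓ f : ℝ → ℝ) (t : ℝ) : ℝ := a * f t + (f ⋆₊ ℓ) t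

section AtomConv

variable {a t : ℝ} {ℓ f f' g : ℝ → ℝ}

theorem atomConv_zero (a : ℝ) (ℓ f : ℝ → ℝ) : atomConv a ℓ f 0 = a * f 0 := by
  simp only [atomConv, causalConv, integral_same, add_zero]

theorem continuousOn_atomConv (a : ℝ) (hℓ : LocallyIntegrableOn ℓ (Ici 0))
    (hf : ContinuousOn f (Ici 0)) : ContinuousOn (atomConv a ℓ f) (Ici 0) :=
  (hf.const_mul a).add (continuousOn_causalConv hf hℓ)

theorem atomConv_causalConv (a : ℝ) (hℓ : LocallyIntegrableOn ℓ (Ici 0))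
    (hf : ContinuousOn f (Ici 0)) (hg : ContinuousOn g (Ici 0)) (ht : 0 ≤ t) :
    (atomConv a ℓ f ⋆₊ g) t = (f ⋆₊ atomConv a ℓ g) t := by
  have hfℓ := continuousOn_causalConv hf hℓ
  have hgℓ := continuousOn_causalConv hg hℓ
  calc (atomConv a ℓ f ⋆₊ g) t
      = a * (f ⋆₊ g) t + (f ⋆₊ ℓ ⋆₊ g) t :=
        causalConv_const_mul_add_left a hf hfℓ (hg.locallyIntegrableOn measurableSet_Ici) ht
    _ = a * (g ⋆₊ f) t + (g ⋆₊ ℓ ⋆₊ f) t := by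
        rw [causalConv_comm f g, causalConv_comm (f ⋆₊ ℓ), causalConv_left_comm hg hf hℓ ht,
          causalConv_comm (g ⋆₊ ℓ)]
    _ = (atomConv a ℓ g ⋆₊ f) t :=
        (causalConv_const_mul_add_left a hg hgℓ (hf.locallyIntegrableOn measurableSet_Ici) ht).symm
    _ = (f ⋆₊ atomConv a ℓ g) t := by rw [causalConv_comm]

theorem contDiffOn_atomConv (a : ℝ) (hℓ : ContinuousOn ℓ (Ici 0)) (hf : ContDiffOn ℝ 1 f (Ici 0)) :
    ContDiffOn ℝ 1 (atomConv a ℓ f) (Ici 0) :=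
  (contDiffOn_const.mul hf).add (contDiffOn_causalConv hf hℓ)

theorem atomConv_eq_add_integral (a : ℝ) (hℓ : LocallyIntegrableOn ℓ (Ici 0))
    (hf : ∀ x ∈ Ici 0, HasDerivWithinAt f (f' x) (Ici 0) x) (hf' : ContinuousOn f' (Ici 0))
    (ht : 0 ≤ t) :
    atomConv a ℓ f t = a * f 0 + ∫ s in (0:ℝ)..t, (f 0 * ℓ s + atomConv a ℓ f' s) := by
  have hf'ℓ := continuousOn_causalConv hf' hℓ
  have hint := fun {g : ℝ → ℝ} (hg : ContinuousOn g (Ici 0)) =>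
    (hg.mono Icc_subset_Ici_self).intervalIntegrable_of_Icc (μ := volume) ht
  simp only [atomConv]
  rw [intervalIntegral.integral_add
      ((intervalIntegrable_of_locallyIntegrableOn_Ici hℓ ht).const_mul _)
      (((hint hf').const_mul _).add (hint hf'ℓ)),
    intervalIntegral.integral_add ((hint hf').const_mul _) (hint hf'ℓ),
    intervalIntegral.integral_const_mul, intervalIntegral.integral_const_mul,
    causalConv_eq_add_integral hf hf' hℓ ht, eq_add_integral_of_hasDerivWithinAt_Ici hf hf' ht]
  ring

end AtomConv

/-- The measure `L(dt) = a δ₀(dt) + ℓ(t) dt` is a resolvent of the first kind of the kernel `K`: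
`K * L = 1` on the half-line. At time `0` this forces `a * K 0 = 1`. -/
def IsFirstKindResolvent (K : ℝ → ℝ) (a : ℝ) (ℓ : ℝ → ℝ) : Prop :=
  ∀ t, 0 ≤ t → atomConv a ℓ K t = 1

namespace IsFirstKindResolvent

variable {K K' ℓ : ℝ → ℝ} {a : ℝ}

theorem atom_mul_kernel_zero (h : IsFirstKindResolvent K a ℓ) : a * K 0 = 1 := by
  simpa only [atomConv_zero] using h 0 le_rfl

theorem density_ae_eq (h : IsFirstKindResolvent K a ℓ) (hℓ : LocallyIntegrableOn ℓ (Ici 0))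
    (hK : ∀ t ∈ Ici 0, HasDerivWithinAt K (K' t) (Ici 0) t) (hK' : ContinuousOn K' (Ici 0)) :
    ℓ =ᵐ[volume.restrict (Ici 0)] fun t => -a * atomConv a ℓ K' t := by
  have hG := (continuousOn_atomConv a hℓ hK').locallyIntegrableOn (μ := volume) measurableSet_Ici
  have hzero := ae_eq_zero_of_forall_integral_eq_zero ((hℓ.smul (K 0)).add hG) fun t ht => by
    have hderiv := atomConv_eq_add_integral a hℓ hK hK' ht
    rwa [h t ht, h.atom_mul_kernel_zero, left_eq_add] at hderiv
  filter_upwards [hzero] with t ht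
  have ht : K 0 * ℓ t + atomConv a ℓ K' t = 0 := ht
  linear_combination a * ht - ℓ t * h.atom_mul_kernel_zero

theorem contDiffOn_atomConv_deriv (h : IsFirstKindResolvent K a ℓ)
    (hℓ : LocallyIntegrableOn ℓ (Ici 0)) (hK : ∀ t ∈ Ici 0, HasDerivWithinAt K (K' t) (Ici 0) t)
    (hK' : ContDiffOn ℝ 1 K' (Ici 0)) : ContDiffOn ℝ 1 (atomConv a ℓ K') (Ici 0) := by
  have hm : ContinuousOn (fun t => -a * atomConv a ℓ K' t) (Ici 0) :=
    (continuousOn_atomConv a hℓ hK'.continuousOn).const_mul (-a)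
  refine (contDiffOn_atomConv a hm hK').congr fun t ht => congrArg (a * K' t + ·) ?_
  exact causalConv_congr (fun _ _ => rfl) (h.density_ae_eq hℓ hK hK'.continuousOn) ht

theorem integral_deriv_eq_causalConv (h : IsFirstKindResolvent K a ℓ)
    (hℓ : LocallyIntegrableOn ℓ (Ici 0)) (hK : ContinuousOn K (Ici 0))
    (hK' : ContinuousOn K' (Ici 0)) {t : ℝ} (ht : 0 ≤ t) :
    ∫ s in (0:ℝ)..t, K' s = (atomConv a ℓ K' ⋆₊ K) t := by
  rw [atomConv_causalConv a hℓ hK' hK ht, causalConv_comm, causalConv_congr_left h ht]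
  exact (one_causalConv K' t).symm

theorem deriv_eq (h : IsFirstKindResolvent K a ℓ) (hℓ : LocallyIntegrableOn ℓ (Ici 0))
    (hK : ∀ t ∈ Ici 0, HasDerivWithinAt K (K' t) (Ici 0) t) (hK' : ContDiffOn ℝ 1 K' (Ici 0))
    {t : ℝ} (ht : 0 ≤ t) :
    K' t = a * K' 0 * K t + (derivWithin (atomConv a ℓ K') (Ici 0) ⋆₊ K) t := by
  have hK_cont : ContinuousOn K (Ici 0) := fun x hx => (hK x hx).continuousWithinAt
  obtain ⟨hG, hG'⟩ := hasDerivWithinAt_of_contDiffOn_one (uniqueDiffOn_Ici 0)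
    (h.contDiffOn_atomConv_deriv hℓ hK hK')
  have hleft := hasDerivWithinAt_integral_of_continuousOn_Ici hK'.continuousOn ht
  have hright := (hasDerivWithinAt_causalConv hG hG' hK_cont ht).congr
    (fun x hx => h.integral_deriv_eq_causalConv hℓ hK_cont hK'.continuousOn hx)
    (h.integral_deriv_eq_causalConv hℓ hK_cont hK'.continuousOn ht)
  rw [← atomConv_zero a ℓ K']
  exact (uniqueDiffOn_Ici 0 t ht).eq_deriv _ hleft hright

end IsFirstKindResolvent

section FractionalKernel

theorem convL_eq_atomConv (ε H : ℝ) (ℓ : ℝ → ℝ) : convL ε H ℓ = atomConv (Kf ε H 0)⁻¹ ℓ := by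
  ext f t
  simp only [convL, atomConv, causalConv, div_eq_inv_mul]

variable {ε : ℝ} (H : ℝ)

theorem hasDerivWithinAt_Kf (hε : 0 < ε) {t : ℝ} (ht : 0 ≤ t) :
    HasDerivWithinAt (Kf ε H) (Kf' ε H t) (Ici 0) t := by
  have hderiv := ((hasDerivAt_id t).add_const ε).rpow_const (p := H - 1/2)
    (Or.inl (add_pos_of_nonneg_of_pos ht hε).ne')
  refine (hderiv.congr_deriv ?_).hasDerivWithinAt
  rw [Kf', one_mul, show H - 1/2 - 1 = H - 3/2 by ring, id]

theorem contDiffOn_Kf' (hε : 0 < ε) : ContDiffOn ℝ 1 (Kf' ε H) (Ici 0) :=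
  contDiffOn_const.mul ((contDiffOn_id.add contDiffOn_const).rpow_const_of_ne fun _ ht =>
    (add_pos_of_nonneg_of_pos ht hε).ne')

theorem inv_Kf_zero_mul_Kf'_zero (hε : 0 < ε) : (Kf ε H 0)⁻¹ * Kf' ε H 0 = (H - 1/2) / ε := by
  have hpow : ε ^ (H - 3/2) = ε ^ (H - 1/2) / ε := by
    rw [← Real.rpow_sub_one hε.ne', show H - 1/2 - 1 = H - 3/2 by ring]
  rw [Kf, Kf', zero_add, hpow]
  field_simp

end FractionalKernel

theorem stmt15_general (ε H : ℝ) (hε : 0 < ε) (ℓ : ℝ → ℝ) (hℓ : LocallyIntegrableOn ℓ (Ici 0))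
    (hres : ∀ t : ℝ, 0 ≤ t → convL ε H ℓ (Kf ε H) t = 1) :
    convL ε H ℓ (Kf' ε H) 0 = (H - 1/2) / ε ∧
    ContDiffOn ℝ 1 (convL ε H ℓ (Kf' ε H)) (Ici 0) ∧
    ∀ t : ℝ, 0 ≤ t →
      Kf' ε H t = (H - 1/2) * ε⁻¹ * Kf ε H t
        + ∫ s in (0:ℝ)..t, derivWithin (convL ε H ℓ (Kf' ε H)) (Ici 0) (t - s) * Kf ε H s := by
  rw [convL_eq_atomConv] at hres ⊢
  have hL : IsFirstKindResolvent (Kf ε H) (Kf ε H 0)⁻¹ ℓ := hres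
  have hK := fun t (ht : t ∈ Ici (0:ℝ)) => hasDerivWithinAt_Kf H hε ht
  refine ⟨?_, hL.contDiffOn_atomConv_deriv hℓ hK (contDiffOn_Kf' H hε), fun t ht => ?_⟩
  · rw [atomConv_zero, inv_Kf_zero_mul_Kf'_zero H hε]
  · rw [← div_eq_mul_inv, ← inv_Kf_zero_mul_Kf'_zero H hε]
    exact hL.deriv_eq hℓ hK (contDiffOn_Kf' H hε) ht

/-- Resolvent-of-the-first-kind identity for the shifted fractional kernel. -/
theorem stmt15 (ε H : ℝ) (hε : 0 < ε) (hH : H ∈ Ioo (-(1:ℝ)/2) (1/2))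
    (ℓ : ℝ → ℝ) (hℓ : LocallyIntegrable ℓ volume)
    (hres : ∀ t : ℝ, 0 ≤ t → convL ε H ℓ (Kf ε H) t = 1) :
    convL ε H ℓ (Kf' ε H) 0 = (H - 1/2) / ε ∧
    (∀ t : ℝ, 0 ≤ t → ContDiffWithinAt ℝ 1 (convL ε H ℓ (Kf' ε H)) (Ici 0) t) ∧
    ∀ᵐ t ∂(volume.restrict (Ici (0:ℝ))),
      Kf' ε H t = (H - 1/2) * ε⁻¹ * Kf ε H t
        + ∫ s in (0:ℝ)..t, derivWithin (convL ε H ℓ (Kf' ε H)) (Ici 0) (t - s) * Kf ε H s :=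
  have ⟨hzero, hdiff, hidentity⟩ := stmt15_general ε H hε ℓ (hℓ.locallyIntegrableOn _) hres
  ⟨hzero, hdiff, ae_restrict_of_forall_mem measurableSet_Ici hidentity⟩
end
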